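/- arXiv:1911.06398 — 4 statements merged into one kernel-verified Lean document; each statement's English description precedes it below -/
import Mathlib

section
/- Let G be a twin graph on n vertices with Laplacian matrix L = L(G), and let t = ⌊(n−1)/2⌋ be its number of pairwise disjoint twin pairs. Let I = {i_1,…,i_p} ⊆ {1,…,n} and let B be the n×p matrix whose columns are the standard basis vectors e_{i_1},…,e_{i_p}. If the pair (L, B) is controllable, i.e., the columns of the matrices B, LB, L²B, …, L^{n−1}B together span ℝ^n, then p ≥ t. -/
open Classical Matrix

noncomputable def lap {n : ℕ} (G : SimpleGraph (Fin n)) : Matrix (Fin n) (Fin n) ℝ :=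
  Matrix.of fun i j =>
    (if i = j then ((G.neighborSet i).ncard : ℝ) else 0) - (if G.Adj i j then 1 else 0)

def IsTwin {n : ℕ} (G : SimpleGraph (Fin n)) (u v : Fin n) : Prop :=
  u ≠ v ∧ G.neighborSet u \ {v} = G.neighborSet v \ {u}

def IsEigenvalue {n : ℕ} (M : Matrix (Fin n) (Fin n) ℝ) (μ : ℝ) : Prop :=
  ∃ x : Fin n → ℝ, x ≠ 0 ∧ M.mulVec x = μ • x

def HasSimpleSpectrum {n : ℕ} (M : Matrix (Fin n) (Fin n) ℝ) : Prop :=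
  ∃ μ : Fin n → ℝ, Function.Injective μ ∧ ∀ i, IsEigenvalue M (μ i)

def Controllable {n : ℕ} (M : Matrix (Fin n) (Fin n) ℝ) (b : Fin n → ℝ) : Prop :=
  Submodule.span ℝ (Set.range fun k : Fin n => (M ^ (k : ℕ)).mulVec b) = ⊤

def StronglyUncontrollable {n : ℕ} (G : SimpleGraph (Fin n)) : Prop :=
  G.Connected ∧ HasSimpleSpectrum (lap G) ∧
    ∀ b : Fin n → ℝ, (∀ i, b i = 0 ∨ b i = 1) → ¬ Controllable (lap G) b

def Pmat {n k : ℕ} (c : Fin n → Fin k) : Matrix (Fin n) (Fin k) ℝ :=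
  Matrix.of fun i j => if c i = j then 1 else 0

def IsAEP {n k : ℕ} (G : SimpleGraph (Fin n)) (c : Fin n → Fin k) : Prop :=
  ∀ i j : Fin k, i ≠ j → ∀ x y : Fin n, c x = i → c y = i →
    (G.neighborSet x ∩ {z | c z = j}).ncard = (G.neighborSet y ∩ {z | c z = j}).ncard

noncomputable def quotLap {n k : ℕ} (G : SimpleGraph (Fin n)) (c : Fin n → Fin k) :
    Matrix (Fin k) (Fin k) ℝ :=
  ((Pmat c)ᵀ * Pmat c)⁻¹ * (Pmat c)ᵀ * lap G * Pmat c

def IsQuotAEP {k m : ℕ} (Lq : Matrix (Fin k) (Fin k) ℝ) (r : Fin k → Fin m) : Prop :=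
  ∀ a b : Fin m, a ≠ b → ∀ C C' : Fin k, r C = a → r C' = a →
    ∑ C'' ∈ Finset.univ.filter (fun C'' => r C'' = b), Lq C C'' =
      ∑ C'' ∈ Finset.univ.filter (fun C'' => r C'' = b), Lq C' C''

def IsGraphAut {n : ℕ} (G : SimpleGraph (Fin n)) (σ : Equiv.Perm (Fin n)) : Prop :=
  ∀ x y, G.Adj x y ↔ G.Adj (σ x) (σ y)

def joinOne {n : ℕ} (G : SimpleGraph (Fin n)) : SimpleGraph (Fin (n + 1)) where
  Adj x y := x ≠ y ∧ ((x : ℕ) = n ∨ (y : ℕ) = n ∨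
    ∃ (hx : (x : ℕ) < n) (hy : (y : ℕ) < n), G.Adj ⟨x, hx⟩ ⟨y, hy⟩)
  symm := by
    refine ⟨?_⟩
    rintro x y ⟨hxy, h⟩
    refine ⟨hxy.symm, ?_⟩
    rcases h with h | h | ⟨hx, hy, h⟩
    exacts [Or.inr (Or.inl h), Or.inl h, Or.inr (Or.inr ⟨hy, hx, h.symm⟩)]
  loopless := ⟨fun x h => h.1 rfl⟩

def joinTwo {n : ℕ} (G : SimpleGraph (Fin n)) : SimpleGraph (Fin (n + 2)) where
  Adj x y := x ≠ y ∧ (((x : ℕ) < n ∧ n ≤ (y : ℕ)) ∨ ((y : ℕ) < n ∧ n ≤ (x : ℕ)) ∨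
    ∃ (hx : (x : ℕ) < n) (hy : (y : ℕ) < n), G.Adj ⟨x, hx⟩ ⟨y, hy⟩)
  symm := by
    refine ⟨?_⟩
    rintro x y ⟨hxy, h⟩
    refine ⟨hxy.symm, ?_⟩
    rcases h with h | h | ⟨hx, hy, h⟩
    exacts [Or.inr (Or.inl h), Or.inl h, Or.inr (Or.inr ⟨hy, hx, h.symm⟩)]
  loopless := ⟨fun x h => h.1 rfl⟩

def addPendant {n : ℕ} (G : SimpleGraph (Fin n)) (v : Fin n) : SimpleGraph (Fin (n + 1)) where
  Adj x y := ((x : ℕ) = n ∧ (y : ℕ) = (v : ℕ)) ∨ ((y : ℕ) = n ∧ (x : ℕ) = (v : ℕ)) ∨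
    ∃ (hx : (x : ℕ) < n) (hy : (y : ℕ) < n), G.Adj ⟨x, hx⟩ ⟨y, hy⟩
  symm := by
    refine ⟨?_⟩
    rintro x y (h | h | ⟨hx, hy, h⟩)
    exacts [Or.inr (Or.inl h), Or.inl h, Or.inr (Or.inr ⟨hy, hx, h.symm⟩)]
  loopless := by
    refine ⟨?_⟩
    intro x h
    have hv := v.isLt
    rcases h with ⟨h1, h2⟩ | ⟨h1, h2⟩ | ⟨hx, hy, h⟩
    · omega
    · omega
    · exact G.loopless.irrefl _ h

theorem twin_adj {n : ℕ} {G : SimpleGraph (Fin n)} {u v : Fin n} (h : IsTwin G u v)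
    (w : Fin n) (hu : w ≠ u) (hv : w ≠ v) : G.Adj u w ↔ G.Adj v w := by
  have := Set.ext_iff.1 h.2 w
  simpa [hu, hv] using this

theorem twin_deg {n : ℕ} {G : SimpleGraph (Fin n)} {u v : Fin n} (h : IsTwin G u v) :
    (G.neighborSet u).ncard = (G.neighborSet v).ncard := by
  have h2 := congrArg Set.ncard h.2
  by_cases ha : G.Adj u v
  · have h3 := Set.ncard_sdiff_singleton_add_one (s := G.neighborSet u) (a := v) ha
    have h4 := Set.ncard_sdiff_singleton_add_one (s := G.neighborSet v) (a := u) ha.symm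
    omega
  · have hb : ¬ G.Adj v u := fun hb => ha hb.symm
    have h3 : G.neighborSet u \ {v} = G.neighborSet u := Set.sdiff_singleton_eq_self ha
    have h4 : G.neighborSet v \ {u} = G.neighborSet v := Set.sdiff_singleton_eq_self hb
    rwa [h3, h4] at h2

theorem twin_lap {n : ℕ} {G : SimpleGraph (Fin n)} {u v : Fin n} (h : IsTwin G u v) :
    ∃ c : ℝ, ∀ w, lap G u w - lap G v w =
      c * ((if u = w then 1 else 0) - (if v = w then 1 else 0)) := by
  refine ⟨(G.neighborSet u).ncard + (if G.Adj u v then 1 else 0), fun w => ?_⟩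
  have hd := twin_deg h
  have hne := h.1
  by_cases hu : w = u
  · subst hu
    simp [lap, hne.symm, G.adj_comm v w]
  · by_cases hv : w = v
    · subst hv
      simp [lap, hne, hd]
      ring
    · have := twin_adj h w hu hv
      simp [lap, Ne.symm hu, Ne.symm hv, this]

theorem twin_pow {n p : ℕ} {G : SimpleGraph (Fin n)} {u v : Fin n} (h : IsTwin G u v)
    (B : Matrix (Fin n) (Fin p) ℝ) (j : Fin p) (hB : B u j = B v j) (k : ℕ) :
    (lap G ^ k * B) u j = (lap G ^ k * B) v j := by
  obtain ⟨c, hc⟩ := twin_lap h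
  induction k with
  | zero => simpa using hB
  | succ k ih =>
    rw [pow_succ', Matrix.mul_assoc, ← sub_eq_zero]
    rw [Matrix.mul_apply (M := lap G), Matrix.mul_apply (M := lap G), ← Finset.sum_sub_distrib]
    simp_rw [← sub_mul, hc, mul_assoc, ← Finset.mul_sum, sub_mul, Finset.sum_sub_distrib]
    simp [ih]

theorem stmt3 {n t p : ℕ} (ht : t = (n - 1) / 2)
    (G : SimpleGraph (Fin n)) (hspec : HasSimpleSpectrum (lap G))
    (u v : Fin t → Fin n) (htwin : ∀ i, IsTwin G (u i) (v i))
    (hdisj : ∀ i j, i ≠ j → ({u i, v i} : Set (Fin n)) ∩ {u j, v j} = ∅)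
    (ι : Fin p → Fin n) (hι : Function.Injective ι)
    (B : Matrix (Fin n) (Fin p) ℝ)
    (hB : B = Matrix.of fun i j => if i = ι j then 1 else 0)
    (hctrl : Submodule.span ℝ {x : Fin n → ℝ | ∃ (k : Fin n) (j : Fin p),
        x = fun i => ((lap G ^ (k : ℕ)) * B) i j} = ⊤) :
    t ≤ p := by
  have key : ∀ i, ∃ j, ι j = u i ∨ ι j = v i := by
    intro i
    by_contra hcon
    push Not at hcon
    let φ : (Fin n → ℝ) →ₗ[ℝ] ℝ :=
      (LinearMap.proj (u i) : (Fin n → ℝ) →ₗ[ℝ] ℝ) - (LinearMap.proj (v i) : (Fin n → ℝ) →ₗ[ℝ] ℝ)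
    have hle : (⊤ : Submodule ℝ (Fin n → ℝ)) ≤ LinearMap.ker φ := by
      rw [← hctrl, Submodule.span_le]
      rintro x ⟨k, j, rfl⟩
      have hb : B (u i) j = B (v i) j := by
        simp [hB, (hcon j).1.symm, (hcon j).2.symm]
      have := twin_pow (htwin i) B j hb k
      simp [φ, this]
    have h1 := hle (x := Pi.single (u i) 1) trivial
    have hne := (htwin i).1
    simp [φ, Pi.single_apply, hne.symm] at h1
  choose f hf using key
  have hinj : Function.Injective f := by
    intro i j hij
    by_contra hne
    have h := hdisj i j hne
    have hm : ι (f i) ∈ ({u i, v i} : Set (Fin n)) ∩ {u j, v j} :=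
      ⟨by simpa using hf i, by rw [hij]; simpa using hf j⟩
    rw [h] at hm
    exact hm
  simpa using Fintype.card_le_of_injective f hinj
end

section
/- Let G be a strongly uncontrollable graph on n vertices and let G̃ be the graph on n+1 vertices obtained from G by adding one new vertex adjacent to every vertex of G. Then G̃ is strongly uncontrollable if and only if every eigenvalue of L(G) is strictly less than n (i.e., the spectral radius of L(G) is less than n). -/
open Classical Matrix

theorem sym_dot {n : ℕ} {M : Matrix (Fin n) (Fin n) ℝ} (hM : Mᵀ = M) {x : Fin n → ℝ} {μ : ℝ}
    (hx : M *ᵥ x = μ • x) (v : Fin n → ℝ) : x ⬝ᵥ (M *ᵥ v) = μ * (x ⬝ᵥ v) := by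
  rw [dotProduct_mulVec, ← mulVec_transpose, hM, hx, smul_dotProduct, smul_eq_mul]

theorem dot_pow {n : ℕ} {M : Matrix (Fin n) (Fin n) ℝ} (hM : Mᵀ = M) {x : Fin n → ℝ} {μ : ℝ}
    (hx : M *ᵥ x = μ • x) (b : Fin n → ℝ) (k : ℕ) :
    x ⬝ᵥ ((M ^ k) *ᵥ b) = μ ^ k * (x ⬝ᵥ b) := by
  induction k with
  | zero => simp
  | succ k ih => rw [pow_succ', ← mulVec_mulVec, sym_dot hM hx, ih, pow_succ']; ring

theorem ortho {n : ℕ} {M : Matrix (Fin n) (Fin n) ℝ} (hM : Mᵀ = M) {x y : Fin n → ℝ} {μ ν : ℝ}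
    (hx : M *ᵥ x = μ • x) (hy : M *ᵥ y = ν • y) (h : μ ≠ ν) : x ⬝ᵥ y = 0 := by
  have h1 := sym_dot hM hx y
  rw [hy, dotProduct_smul, smul_eq_mul] at h1
  have : (μ - ν) * (x ⬝ᵥ y) = 0 := by linarith
  rcases mul_eq_zero.1 this with h2 | h2
  · exact absurd (by linarith) h
  · exact h2

theorem uncontrollable_of {n : ℕ} {M : Matrix (Fin n) (Fin n) ℝ} (hM : Mᵀ = M) {x : Fin n → ℝ}
    {μ : ℝ} (hx0 : x ≠ 0) (hx : M *ᵥ x = μ • x) {b : Fin n → ℝ} (hb : x ⬝ᵥ b = 0) :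
    ¬ Controllable M b := by
  intro hc
  apply hx0
  have hall : ∀ y ∈ Submodule.span ℝ (Set.range fun k : Fin n => (M ^ (k : ℕ)).mulVec b),
      x ⬝ᵥ y = 0 := by
    intro y hy
    induction hy using Submodule.span_induction with
    | mem y hy =>
      obtain ⟨k, rfl⟩ := hy
      show x ⬝ᵥ ((M ^ (k : ℕ)) *ᵥ b) = 0
      rw [dot_pow hM hx, hb, mul_zero]
    | zero => exact dotProduct_zero x
    | add y z _ _ h1 h2 => rw [dotProduct_add, h1, h2, add_zero]
    | smul c y _ h => rw [dotProduct_smul, h, smul_zero]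
  have hc' : Submodule.span ℝ (Set.range fun k : Fin n => (M ^ (k : ℕ)).mulVec b) = ⊤ := hc
  have : x ⬝ᵥ x = 0 := hall x (by rw [hc']; trivial)
  exact dotProduct_self_eq_zero.1 this

theorem exists_of_uncontrollable {n : ℕ} {M : Matrix (Fin n) (Fin n) ℝ} (hM : Mᵀ = M)
    (hs : HasSimpleSpectrum M) {b : Fin n → ℝ} (hc : ¬ Controllable M b) :
    ∃ (μ : ℝ) (x : Fin n → ℝ), x ≠ 0 ∧ M *ᵥ x = μ • x ∧ x ⬝ᵥ b = 0 := by
  obtain ⟨μ, hμ, he⟩ := hs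
  choose x hx0 hx using he
  by_contra! hne
  apply hc
  let K : Matrix (Fin n) (Fin n) ℝ := Matrix.of fun k => (M ^ (k : ℕ)).mulVec b
  have hXK : (Matrix.of x) * Kᵀ = Matrix.diagonal (fun i => x i ⬝ᵥ b) * vandermonde μ := by
    ext i k
    rw [diagonal_mul, mul_apply']
    show x i ⬝ᵥ ((M ^ (k : ℕ)) *ᵥ b) = _
    rw [dot_pow hM (hx i), vandermonde_apply, mul_comm]
  have hdet : K.det ≠ 0 := by
    intro h0
    have := congrArg Matrix.det hXK
    rw [det_mul, det_transpose, h0, mul_zero, det_mul, det_diagonal] at this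
    rcases mul_eq_zero.1 this.symm with h | h
    · obtain ⟨i, -, hi⟩ := Finset.prod_eq_zero_iff.1 h
      exact hne _ _ (hx0 i) (hx i) hi
    · exact det_vandermonde_ne_zero_iff.2 hμ h
  have hli : LinearIndependent ℝ K.row :=
    linearIndependent_rows_iff_isUnit.2 ((isUnit_iff_isUnit_det _).2 (isUnit_iff_ne_zero.2 hdet))
  exact hli.span_eq_top_of_card_eq_finrank' (by simp)

theorem eq_zero_of_ortho {n : ℕ} {M : Matrix (Fin n) (Fin n) ℝ} {μ : Fin n → ℝ}
    (hμ : Function.Injective μ) {x : Fin n → Fin n → ℝ} (hx0 : ∀ i, x i ≠ 0)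
    (hx : ∀ i, M *ᵥ x i = μ i • x i) {w : Fin n → ℝ} (hw : ∀ i, x i ⬝ᵥ w = 0) : w = 0 := by
  have hli : LinearIndependent ℝ (Matrix.of x).row :=
    Module.End.eigenvectors_linearIndependent' (Matrix.toLin' M) μ hμ x
      (fun i => ⟨by rw [Module.End.mem_eigenspace_iff]; simpa using hx i, hx0 i⟩)
  have hu := linearIndependent_rows_iff_isUnit.1 hli
  rw [isUnit_iff_isUnit_det, isUnit_iff_ne_zero] at hu
  apply eq_zero_of_mulVec_eq_zero hu
  ext i
  exact hw i

theorem lap_apply {n : ℕ} (G : SimpleGraph (Fin n)) (x : Fin n → ℝ) (i : Fin n) :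
    (lap G *ᵥ x) i = ∑ j, if G.Adj i j then x i - x j else 0 := by
  have hc : ((G.neighborSet i).ncard : ℝ) = ∑ j, if G.Adj i j then (1 : ℝ) else 0 := by
    rw [Set.ncard_eq_toFinset_card', Finset.sum_boole]
    congr 2
    ext j; simp
  simp only [lap, mulVec, dotProduct, of_apply, sub_mul, Finset.sum_sub_distrib, ite_mul, zero_mul,
    Finset.sum_ite_eq, Finset.mem_univ, if_true, one_mul]
  rw [hc, Finset.sum_mul, ← Finset.sum_sub_distrib]
  refine Finset.sum_congr rfl fun j _ => ?_
  split_ifs <;> simp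

theorem lap_symm {n : ℕ} (G : SimpleGraph (Fin n)) : (lap G)ᵀ = lap G := by
  ext i j
  simp only [lap, transpose_apply, of_apply, G.adj_comm i j]
  by_cases h : i = j
  · subst h; rfl
  · simp [h, Ne.symm h]

theorem lap_eq {n : ℕ} (G : SimpleGraph (Fin n)) : lap G = G.lapMatrix ℝ := by
  ext i j
  have hc : (G.neighborSet i).ncard = G.degree i := by
    rw [Set.ncard_eq_toFinset_card', ← SimpleGraph.card_neighborFinset_eq_degree]
    congr 1
  simp [lap, SimpleGraph.lapMatrix, SimpleGraph.degMatrix, diagonal_apply, hc]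

theorem lap_nonneg {n : ℕ} (G : SimpleGraph (Fin n)) (x : Fin n → ℝ) :
    0 ≤ x ⬝ᵥ (lap G *ᵥ x) := by
  rw [lap_eq]
  simpa using (SimpleGraph.posSemidef_lapMatrix ℝ G).dotProduct_mulVec_nonneg x

theorem lap_one {n : ℕ} (G : SimpleGraph (Fin n)) : lap G *ᵥ (fun _ => 1) = (0 : ℝ) • fun _ => 1 := by
  ext i
  rw [lap_apply]; simp

theorem dot_pos {n : ℕ} {x : Fin n → ℝ} (h : x ≠ 0) : 0 < x ⬝ᵥ x := by
  have h1 : 0 ≤ x ⬝ᵥ x := Finset.sum_nonneg fun i _ => mul_self_nonneg _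
  exact lt_of_le_of_ne h1 fun h2 => h (dotProduct_self_eq_zero.1 h2.symm)

theorem eig_nonneg {n : ℕ} (G : SimpleGraph (Fin n)) {μ : ℝ} (h : IsEigenvalue (lap G) μ) :
    0 ≤ μ := by
  obtain ⟨x, hx0, hx⟩ := h
  have h1 := lap_nonneg G x
  rw [hx, dotProduct_smul, smul_eq_mul] at h1
  exact nonneg_of_mul_nonneg_left h1 (dot_pos hx0)

theorem sum_zero {n : ℕ} (G : SimpleGraph (Fin n)) {μ : ℝ} (h : μ ≠ 0) {x : Fin n → ℝ}
    (hx : lap G *ᵥ x = μ • x) : ∑ i, x i = 0 := by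
  have := ortho (lap_symm G) hx (lap_one G) h
  simpa [dotProduct] using this

theorem lap_compl {n : ℕ} (G : SimpleGraph (Fin n)) (x : Fin n → ℝ) (hs : ∑ i, x i = 0) :
    lap Gᶜ *ᵥ x = (n : ℝ) • x - lap G *ᵥ x := by
  ext i
  rw [Pi.sub_apply, lap_apply, lap_apply, eq_sub_iff_add_eq, ← Finset.sum_add_distrib]
  have : ∀ j, ((if Gᶜ.Adj i j then x i - x j else 0) + if G.Adj i j then x i - x j else 0)
      = x i - x j := by
    intro j
    by_cases hij : i = j
    · subst hij; simp
    · by_cases h : G.Adj i j <;> simp [SimpleGraph.compl_adj, hij, h]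
  trans ∑ j, (x i - x j)
  · refine Finset.sum_congr rfl fun j _ => ?_
    convert this j
  · simp [hs]

theorem eig_le {n : ℕ} (G : SimpleGraph (Fin n)) {μ : ℝ} (h : IsEigenvalue (lap G) μ) :
    μ ≤ n := by
  by_cases h0 : μ = 0
  · subst h0; positivity
  obtain ⟨x, hx0, hx⟩ := h
  have h1 := lap_nonneg Gᶜ x
  rw [lap_compl G x (sum_zero G h0 hx), hx, ← sub_smul, dotProduct_smul, smul_eq_mul] at h1
  have := nonneg_of_mul_nonneg_left h1 (dot_pos hx0)
  linarith

theorem join_castSucc {n : ℕ} (G : SimpleGraph (Fin n)) (i j : Fin n) :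
    (joinOne G).Adj i.castSucc j.castSucc ↔ G.Adj i j := by
  have hi := i.isLt.ne
  have hj := j.isLt.ne
  simp only [joinOne, Fin.val_castSucc, hi, hj, false_or, Fin.is_lt, Fin.eta, exists_true_left]
  constructor
  · rintro ⟨-, h⟩; exact h
  · intro h; exact ⟨fun e => h.ne (Fin.castSucc_injective _ e), h⟩

theorem join_last {n : ℕ} (G : SimpleGraph (Fin n)) (i : Fin n) :
    (joinOne G).Adj i.castSucc (Fin.last n) := by
  refine ⟨(Fin.castSucc_lt_last i).ne, Or.inr (Or.inl rfl)⟩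

theorem join_apply {n : ℕ} (G : SimpleGraph (Fin n)) (x : Fin n → ℝ) (s : ℝ) :
    lap (joinOne G) *ᵥ (Fin.snoc x s : Fin (n + 1) → ℝ) =
      (Fin.snoc (lap G *ᵥ x + fun i => x i - s) (n * s - ∑ i, x i) : Fin (n + 1) → ℝ) := by
  ext i
  rw [lap_apply, Fin.sum_univ_castSucc]
  induction i using Fin.lastCases with
  | last => simp [(join_last G _).symm]
  | cast i => simp [join_castSucc, join_last, lap_apply]

theorem join_eig {n : ℕ} (G : SimpleGraph (Fin n)) {x : Fin n → ℝ} {μ : ℝ} (h0 : μ ≠ 0)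
    (hx : lap G *ᵥ x = μ • x) :
    lap (joinOne G) *ᵥ (Fin.snoc x 0 : Fin (n + 1) → ℝ) =
      (μ + 1) • (Fin.snoc x 0 : Fin (n + 1) → ℝ) := by
  rw [join_apply, sum_zero G h0 hx, hx]
  ext i
  induction i using Fin.lastCases with
  | last => simp
  | cast i => simp; ring

theorem snoc_ne {n : ℕ} {x : Fin n → ℝ} (h : x ≠ 0) (s : ℝ) :
    (Fin.snoc x s : Fin (n + 1) → ℝ) ≠ 0 := by
  intro e
  apply h
  ext i
  simpa using congrFun e i.castSucc

theorem join_top {n : ℕ} (G : SimpleGraph (Fin n)) :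
    lap (joinOne G) *ᵥ (Fin.snoc (fun _ => 1) (-n : ℝ) : Fin (n + 1) → ℝ) =
      ((n : ℝ) + 1) • (Fin.snoc (fun _ => 1) (-n : ℝ) : Fin (n + 1) → ℝ) := by
  rw [join_apply, lap_one]
  ext i
  induction i using Fin.lastCases with
  | last => simp; ring
  | cast i => simp; ring

theorem join_connected {n : ℕ} (G : SimpleGraph (Fin n)) : (joinOne G).Connected := by
  have h : ∀ i, (joinOne G).Reachable i (Fin.last n) := by
    intro i
    induction i using Fin.lastCases with
    | last => exact SimpleGraph.Reachable.refl _
    | cast i => exact (join_last G i).reachable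
  exact { preconnected := fun i j => (h i).trans (h j).symm, nonempty := ⟨Fin.last n⟩ }

theorem dot_snoc {n : ℕ} (x : Fin n → ℝ) (b : Fin (n + 1) → ℝ) :
    (Fin.snoc x 0 : Fin (n + 1) → ℝ) ⬝ᵥ b = x ⬝ᵥ fun i => b i.castSucc := by
  simp [dotProduct, Fin.sum_univ_castSucc]

theorem ker_const {n : ℕ} (G : SimpleGraph (Fin n)) (hc : G.Connected) {x : Fin n → ℝ}
    (hx : lap G *ᵥ x = (0 : ℝ) • x) (i j : Fin n) : x i = x j := by
  rw [zero_smul, lap_eq] at hx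
  exact (SimpleGraph.lapMatrix_mulVec_eq_zero_iff_forall_reachable G).1 hx i j (hc.preconnected i j)

theorem exists_nonzero {n : ℕ} (G : SimpleGraph (Fin n)) (hG : StronglyUncontrollable G)
    {b : Fin n → ℝ} (hb : ∀ i, b i = 0 ∨ b i = 1) (hb0 : ∃ i, b i = 1) :
    ∃ (μ : ℝ) (x : Fin n → ℝ), μ ≠ 0 ∧ x ≠ 0 ∧ lap G *ᵥ x = μ • x ∧ x ⬝ᵥ b = 0 := by
  obtain ⟨hc, hs, hu⟩ := hG
  obtain ⟨μ, x, hx0, hx, hxb⟩ := exists_of_uncontrollable (lap_symm G) hs (hu b hb)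
  refine ⟨μ, x, ?_, hx0, hx, hxb⟩
  rintro rfl
  obtain ⟨i, hi⟩ := hb0
  have hconst : x = fun _ => x i := funext fun j => ker_const G hc hx j i
  have hsum : x ⬝ᵥ b = x i * ∑ j, b j := by
    rw [Finset.mul_sum]
    exact Finset.sum_congr rfl fun j _ => by rw [ker_const G hc hx j i]
  have hpos : 0 < ∑ j, b j := by
    refine Finset.sum_pos' (fun j _ => ?_) ⟨i, Finset.mem_univ _, by rw [hi]; norm_num⟩
    rcases hb j with h | h <;> rw [h] <;> norm_num
  rw [hsum] at hxb
  rcases mul_eq_zero.1 hxb with h | h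
  · apply hx0; rw [hconst, h]; rfl
  · exact hpos.ne' h

theorem eig_mem {n : ℕ} {M : Matrix (Fin n) (Fin n) ℝ} (hM : Mᵀ = M) {μ : Fin n → ℝ}
    (hμ : Function.Injective μ) (he : ∀ i, IsEigenvalue M (μ i)) {ν : ℝ}
    (hν : IsEigenvalue M ν) : ∃ i, μ i = ν := by
  choose x hx0 hx using he
  obtain ⟨y, hy0, hy⟩ := hν
  by_contra! h
  exact hy0 (eq_zero_of_ortho hμ hx0 hx fun i => ortho hM (hx i) hy (h i))

theorem eig_dep {n : ℕ} {M : Matrix (Fin n) (Fin n) ℝ} (hM : Mᵀ = M) (hs : HasSimpleSpectrum M)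
    {ν : ℝ} {u v : Fin n → ℝ} (hu0 : u ≠ 0) (hu : M *ᵥ u = ν • u) (hv : M *ᵥ v = ν • v) :
    ∃ a b : ℝ, b ≠ 0 ∧ a • u = b • v := by
  obtain ⟨μ, hμ, he⟩ := hs
  obtain ⟨i, hi⟩ := eig_mem hM hμ he ⟨u, hu0, hu⟩
  choose x hx0 hx using he
  have hne : ∀ j, j ≠ i → μ j ≠ ν := fun j hj h => hj (hμ (h.trans hi.symm))
  refine ⟨x i ⬝ᵥ v, x i ⬝ᵥ u, ?_, ?_⟩
  · intro h0
    refine hu0 (eq_zero_of_ortho hμ hx0 hx fun j => ?_)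
    by_cases hj : j = i
    · rw [hj, h0]
    · exact ortho hM (hx j) hu (hne j hj)
  · rw [← sub_eq_zero]
    refine eq_zero_of_ortho hμ hx0 hx fun j => ?_
    rw [dotProduct_sub, dotProduct_smul, dotProduct_smul, smul_eq_mul, smul_eq_mul]
    by_cases hj : j = i
    · rw [hj]; ring
    · rw [ortho hM (hx j) hu (hne j hj), ortho hM (hx j) hv (hne j hj)]; ring

theorem stmt6 {n : ℕ} (G : SimpleGraph (Fin n)) (hG : StronglyUncontrollable G) :
    StronglyUncontrollable (joinOne G) ↔
      ∀ μ : ℝ, IsEigenvalue (lap G) μ → μ < n := by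
  obtain ⟨i0⟩ := hG.1.nonempty
  have hn : (0 : ℝ) < n := by exact_mod_cast i0.pos
  have h1 : (fun _ => 1 : Fin n → ℝ) ≠ 0 := fun h => one_ne_zero (congrFun h i0)
  constructor
  · rintro ⟨-, hs, -⟩ μ hμ
    refine lt_of_le_of_ne (eig_le G hμ) ?_
    rintro rfl
    obtain ⟨x, hx0, hx⟩ := hμ
    obtain ⟨a, b, hb, hab⟩ := eig_dep (lap_symm (joinOne G)) hs (snoc_ne hx0 0)
      (join_eig G hn.ne' hx) (join_top G)
    have := congrFun hab (Fin.last n)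
    simp [hb, hn.ne'] at this
  · intro hlt
    refine ⟨join_connected G, ?_, ?_⟩
    · obtain ⟨μ, hμ, he⟩ := hG.2.1
      refine ⟨Fin.snoc (fun i => if μ i = 0 then 0 else μ i + 1) (n + 1), ?_, ?_⟩
      · have hk : ∀ i, 0 ≤ μ i ∧ μ i < n := fun i => ⟨eig_nonneg G (he i), hlt _ (he i)⟩
        rw [Fin.snoc_injective_iff]
        refine ⟨?_, ?_⟩
        · intro i j hij
          have hi := hk i
          have hj := hk j
          apply hμ
          simp only at hij
          split_ifs at hij <;> linarith
        · rintro ⟨i, hi⟩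
          have := hk i
          simp only at hi
          split_ifs at hi <;> linarith
      · intro i
        induction i using Fin.lastCases with
        | last =>
          rw [Fin.snoc_last]
          exact ⟨_, snoc_ne h1 _, join_top G⟩
        | cast i =>
          rw [Fin.snoc_castSucc]
          split_ifs with h
          · exact ⟨fun _ => 1, fun h => one_ne_zero (congrFun h 0), lap_one _⟩
          · obtain ⟨x, hx0, hx⟩ := he i
            exact ⟨_, snoc_ne hx0 0, join_eig G h hx⟩
    · intro b hb
      by_cases hb1 : ∃ i : Fin n, b i.castSucc = 1
      · obtain ⟨μ, x, hμ, hx0, hx, hxb⟩ := exists_nonzero G hG (fun i => hb i.castSucc) hb1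
        exact uncontrollable_of (lap_symm _) (snoc_ne hx0 0) (join_eig G hμ hx)
          (by rw [dot_snoc, hxb])
      · have hz : (fun i : Fin n => b i.castSucc) = 0 :=
          funext fun i => (hb _).resolve_right fun h => hb1 ⟨i, h⟩
        obtain ⟨μ, x, hμ, hx0, hx, -⟩ := exists_nonzero G hG (b := fun _ => 1)
          (fun _ => Or.inr rfl) ⟨i0, rfl⟩
        exact uncontrollable_of (lap_symm _) (snoc_ne hx0 0) (join_eig G hμ hx)
          (by rw [dot_snoc, hz, dotProduct_zero])
end

section
/- Let G be a simple graph on n vertices, let u ≠ v be vertices of G, and let σ be the permutation of the vertex set that transposes u and v and fixes all other vertices. Then σ is an automorphism of G if and only if x = e_u − e_v is an eigenvector of L(G); in that case the corresponding eigenvalue is λ = deg(u) + A(G)_{u,v}. -/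
open Classical Matrix

theorem lap_mulVec_aux {n : ℕ} (G : SimpleGraph (Fin n)) (u v i : Fin n) :
    (lap G).mulVec
      (fun i => (if i = u then (1 : ℝ) else 0) - (if i = v then 1 else 0)) i
      = lap G i u - lap G i v := by
  simp [Matrix.mulVec, dotProduct, mul_sub, Finset.sum_sub_distrib]

theorem stmt15 {n : ℕ} (G : SimpleGraph (Fin n)) (u v : Fin n) (huv : u ≠ v) :
    ((∀ a b : Fin n, G.Adj a b ↔ G.Adj (Equiv.swap u v a) (Equiv.swap u v b)) ↔
      ∃ μ : ℝ, (lap G).mulVec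
          (fun i => (if i = u then (1 : ℝ) else 0) - (if i = v then 1 else 0)) =
        μ • (fun i => (if i = u then (1 : ℝ) else 0) - (if i = v then 1 else 0))) ∧
    ((∀ a b : Fin n, G.Adj a b ↔ G.Adj (Equiv.swap u v a) (Equiv.swap u v b)) →
      (lap G).mulVec
          (fun i => (if i = u then (1 : ℝ) else 0) - (if i = v then 1 else 0)) =
        (((G.neighborSet u).ncard : ℝ) + (if G.Adj u v then 1 else 0)) •
          (fun i => (if i = u then (1 : ℝ) else 0) - (if i = v then 1 else 0))) := by
  have key : (∀ a b : Fin n, G.Adj a b ↔ G.Adj (Equiv.swap u v a) (Equiv.swap u v b)) →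
      (lap G).mulVec
          (fun i => (if i = u then (1 : ℝ) else 0) - (if i = v then 1 else 0)) =
        (((G.neighborSet u).ncard : ℝ) + (if G.Adj u v then 1 else 0)) •
          (fun i => (if i = u then (1 : ℝ) else 0) - (if i = v then 1 else 0)) := by
    intro h
    have hdeg : (G.neighborSet v).ncard = (G.neighborSet u).ncard := by
      have : G.neighborSet v = (Equiv.swap u v) '' (G.neighborSet u) := by
        ext w
        rw [Equiv.image_eq_preimage_symm]
        simp only [Equiv.symm_swap, Set.mem_preimage, SimpleGraph.mem_neighborSet]
        rw [h v w, Equiv.swap_apply_right]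
      rw [this, Set.ncard_image_of_injective _ (Equiv.injective _)]
    funext i
    rw [lap_mulVec_aux]
    simp only [lap, Matrix.of_apply, Pi.smul_apply, smul_eq_mul]
    by_cases hu : i = u
    · subst hu
      simp [huv]
    · by_cases hv : i = v
      · subst hv
        simp [hu, hdeg, G.adj_comm i u]
        ring
      · have := h i u
        rw [Equiv.swap_apply_of_ne_of_ne hu hv, Equiv.swap_apply_left] at this
        simp [hu, hv, this]
  refine ⟨⟨fun h => ⟨_, key h⟩, ?_⟩, key⟩
  rintro ⟨μ, hμ⟩
  have tw : ∀ i, i ≠ u → i ≠ v → (G.Adj i u ↔ G.Adj i v) := by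
    intro i hu hv
    have := congrFun hμ i
    rw [lap_mulVec_aux] at this
    simp only [lap, Matrix.of_apply, Pi.smul_apply, smul_eq_mul] at this
    by_cases h1 : G.Adj i u <;> by_cases h2 : G.Adj i v <;> simp [hu, hv, h1, h2] at this ⊢
  have tw' : ∀ i, i ≠ u → i ≠ v → (G.Adj u i ↔ G.Adj v i) := by
    intro i hu hv
    rw [G.adj_comm u, G.adj_comm v]
    exact tw i hu hv
  intro a b
  have hc := G.adj_comm u v
  have hl : ∀ x, ¬ G.Adj x x := fun x => G.irrefl
  simp only [Equiv.swap_apply_def]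
  grind
end

section
/- Let G be a simple graph on an even number n of vertices whose vertex set is the disjoint union of n/2 twin pairs. Then for every one of these twin pairs {u,v}, the integer deg(u) + A(G)_{u,v} (which is the Laplacian eigenvalue induced by the twin pair) is even. -/
open Classical Matrix

theorem stmt18 {n t : ℕ} (hn : n = 2 * t) (G : SimpleGraph (Fin n))
    (u v : Fin t → Fin n) (htwin : ∀ i, IsTwin G (u i) (v i))
    (p : Fin n → Fin t) (hp : ∀ (i : Fin t) (x : Fin n), p x = i ↔ (x = u i ∨ x = v i)) :
    ∀ i, Even ((G.neighborSet (u i)).ncard + (if G.Adj (u i) (v i) then 1 else 0)) := by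
  intro i
  set a : Fin n → ℕ := fun x => if G.Adj (u i) x then 1 else 0 with ha
  have h1 : (G.neighborSet (u i)).ncard = ∑ x, a x := by
    rw [Set.ncard_eq_toFinset_card', ha, ← Finset.card_filter]
    congr 1
    ext x
    simp
  have h2 : ∑ x, a x = ∑ j, (a (u j) + a (v j)) := by
    rw [← Finset.sum_fiberwise (s := Finset.univ) (g := p) (f := a)]
    refine Finset.sum_congr rfl fun j _ => ?_
    have : Finset.univ.filter (fun x => p x = j) = {u j, v j} := by
      ext x
      simp [hp]
    rw [this, Finset.sum_pair (htwin j).1]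
  have h3 : (if G.Adj (u i) (v i) then 1 else 0) = ∑ j, (if j = i then a (v i) else 0) := by
    simp [ha]
  rw [h1, h2, h3, ← Finset.sum_add_distrib]
  refine Finset.even_sum _ fun j _ => ?_
  by_cases hj : j = i
  · subst hj
    simp [ha]
  · have hu : p (u i) = i := (hp _ _).2 (Or.inl rfl)
    have hne : ¬ (u i = u j ∨ u i = v j) := fun h => hj (((hp j _).2 h).symm.trans hu)
    push Not at hne
    have key : G.Adj (u i) (u j) ↔ G.Adj (u i) (v j) := by
      have := Set.ext_iff.1 (htwin j).2 (u i)
      simp [hne.1, hne.2] at this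
      rw [G.adj_comm, this, G.adj_comm]
    simp [hj, ha, key]
end
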